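/- arXiv:2311.07018 — 4 statements merged into one kernel-verified Lean document; each statement's English description precedes it below -/
import Mathlib

section
/- Let n ∈ ℕ, t ≥ 0, K ∈ ℝ and L ≥ 0. Let A : [t,∞) → ℝ^{n×n} be measurable with operator norm ‖A(s)‖ ≤ L for almost every s, let b : [t,∞) → ℝ^n be measurable, and let x : [t,∞) → ℝ^n be locally absolutely continuous with x'(s) = A(s)x(s) + b(s) for almost every s ≥ t. If x ∈ L^{2,K}(t,∞;ℝ^n) and b ∈ L^{2,K}(t,∞;ℝ^n), then lim_{s→∞} e^{Ks} x(s) = 0. -/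
open MeasureTheory Matrix

theorem aestronglyMeasurable_restrict_Ici_of_Icc {E : Type*} [TopologicalSpace E]
    [TopologicalSpace.PseudoMetrizableSpace E] {f : ℝ → E} {t : ℝ}
    (hf : ∀ T, t ≤ T → AEStronglyMeasurable f (volume.restrict (Set.Icc t T))) :
    AEStronglyMeasurable f (volume.restrict (Set.Ici t)) := by
  have hU : Set.Ici t = ⋃ k : ℕ, Set.Icc t (t + k) := by
    ext s
    simp only [Set.mem_Ici, Set.mem_iUnion, Set.mem_Icc]
    refine ⟨fun h => ?_, fun ⟨_, h, _⟩ => h⟩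
    obtain ⟨k, hk⟩ := exists_nat_ge (s - t)
    exact ⟨k, h, by linarith⟩
  rw [hU, aestronglyMeasurable_iUnion_iff]
  exact fun k => hf _ (by simp)

theorem absolutelyContinuousOnInterval_const_add_integral {g : ℝ → ℝ} {t T c : ℝ}
    (hg : IntervalIntegrable g volume t T) :
    AbsolutelyContinuousOnInterval (fun s => c + ∫ r in t..s, g r) t T :=
  (contDiff_const (c := c)).contDiffOn.absolutelyContinuousOnInterval.fun_add
    (hg.absolutelyContinuousOnInterval_intervalIntegral Set.left_mem_uIcc)

/-- Fundamental theorem of calculus for `e^{2Ks} y(s)²` when `y` is a primitive of `g`. -/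
theorem integral_deriv_exp_mul_sq_of_primitive {t : ℝ} {y g : ℝ → ℝ}
    (hg : ∀ T, t ≤ T → IntegrableOn g (Set.Icc t T))
    (hy : ∀ s, t ≤ s → y s = y t + ∫ r in t..s, g r)
    (K : ℝ) {T : ℝ} (hT : t ≤ T) :
    ∫ s in t..T, (2 * K * (Real.exp (2 * K * s) * y s ^ 2) +
        2 * (Real.exp (2 * K * s) * (y s * g s))) =
      Real.exp (2 * K * T) * y T ^ 2 - Real.exp (2 * K * t) * y t ^ 2 := by
  have hgi : IntervalIntegrable g volume t T :=
    (intervalIntegrable_iff_integrableOn_Icc_of_le hT).2 (hg T hT)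
  have hz := absolutelyContinuousOnInterval_const_add_integral (c := y t) hgi
  have he : AbsolutelyContinuousOnInterval (fun s => Real.exp (2 * K * s)) t T :=
    ContDiffOn.absolutelyContinuousOnInterval
      (by fun_prop : ContDiff ℝ 1 fun s => Real.exp (2 * K * s)).contDiffOn
  have key := (he.fun_mul (hz.fun_mul hz)).integral_deriv_eq_sub
  have h₁ : Real.exp (2 * K * T) * y T ^ 2 - Real.exp (2 * K * t) * y t ^ 2 =
      Real.exp (2 * K * T) * ((y t + ∫ r in t..T, g r) * (y t + ∫ r in t..T, g r)) -
      Real.exp (2 * K * t) * ((y t + ∫ r in t..t, g r) * (y t + ∫ r in t..t, g r)) := by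
    rw [← hy T hT, ← hy t le_rfl]
    ring
  rw [h₁, ← key]
  refine intervalIntegral.integral_congr_ae ?_
  filter_upwards [hgi.ae_hasDerivAt_integral] with s hs hsT
  have hd := (hs (Set.uIoc_subset_uIcc hsT) t Set.left_mem_uIcc).const_add (y t)
  have hde : HasDerivAt (fun s => Real.exp (2 * K * s)) (Real.exp (2 * K * s) * (2 * K)) s := by
    simpa using ((hasDerivAt_id s).const_mul (2 * K)).exp
  rw [Set.uIoc_of_le hT] at hsT
  rw [(hde.fun_mul (hd.fun_mul hd)).deriv, ← hy s hsT.1.le]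
  ring

theorem aestronglyMeasurable_of_primitive {t : ℝ} {y g : ℝ → ℝ}
    (hg : ∀ T, t ≤ T → IntegrableOn g (Set.Icc t T))
    (hy : ∀ s, t ≤ s → y s = y t + ∫ r in t..s, g r) :
    AEStronglyMeasurable y (volume.restrict (Set.Ici t)) := by
  refine aestronglyMeasurable_restrict_Ici_of_Icc fun T hT => ?_
  have hgi : IntervalIntegrable g volume t T :=
    (intervalIntegrable_iff_integrableOn_Icc_of_le hT).2 (hg T hT)
  have hc := (absolutelyContinuousOnInterval_const_add_integral (c := y t) hgi).continuousOn
  rw [Set.uIcc_of_le hT] at hc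
  exact (hc.congr fun s hs => hy s hs.1).aestronglyMeasurable measurableSet_Icc

/-- A primitive `y` of `g` on `[t, ∞)` with `y` and `g` both in the weighted space `L^{2,K}`
satisfies `e^{Ks} y(s) → 0`. -/
theorem tendsto_exp_mul_zero_of_primitive {t : ℝ} {y g : ℝ → ℝ}
    (hg : ∀ T, t ≤ T → IntegrableOn g (Set.Icc t T))
    (hy : ∀ s, t ≤ s → y s = y t + ∫ r in t..s, g r) (K : ℝ)
    (hyL2 : IntegrableOn (fun s => Real.exp (2 * K * s) * y s ^ 2) (Set.Ici t))
    (hgL2 : IntegrableOn (fun s => Real.exp (2 * K * s) * g s ^ 2) (Set.Ici t)) :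
    Filter.Tendsto (fun s => Real.exp (K * s) * y s) Filter.atTop (nhds 0) := by
  have hym := aestronglyMeasurable_of_primitive hg hy
  have hgm : AEStronglyMeasurable g (volume.restrict (Set.Ici t)) :=
    aestronglyMeasurable_restrict_Ici_of_Icc fun T hT => (hg T hT).aestronglyMeasurable
  have hcross : IntegrableOn (fun s => Real.exp (2 * K * s) * (y s * g s)) (Set.Ici t) := by
    refine (hyL2.add hgL2).mono' ?_ (Filter.Eventually.of_forall fun s => ?_)
    · exact (by fun_prop : Continuous fun s => Real.exp (2 * K * s)).aestronglyMeasurable.mul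
        (hym.mul hgm)
    · have h : |y s * g s| ≤ y s ^ 2 + g s ^ 2 :=
        abs_le.2 ⟨by nlinarith [sq_nonneg (y s + g s), sq_nonneg (y s), sq_nonneg (g s)],
          by nlinarith [sq_nonneg (y s - g s), sq_nonneg (y s), sq_nonneg (g s)]⟩
      simp only [Pi.add_apply, Real.norm_eq_abs, abs_mul (Real.exp _), Real.abs_exp]
      rw [← mul_add]
      gcongr
  have hderiv : IntegrableOn (fun s => 2 * K * (Real.exp (2 * K * s) * y s ^ 2) +
      2 * (Real.exp (2 * K * s) * (y s * g s))) (Set.Ici t) :=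
    (hyL2.const_mul (2 * K)).add (hcross.const_mul 2)
  have hlim := ((intervalIntegral_tendsto_integral_Ioi t
    (hderiv.mono_set Set.Ioi_subset_Ici_self) Filter.tendsto_id).const_add
      (Real.exp (2 * K * t) * y t ^ 2)).congr' <|
    show _ =ᶠ[Filter.atTop] fun s => Real.exp (2 * K * s) * y s ^ 2 by
      filter_upwards [Filter.eventually_ge_atTop t] with T hT
      have h := integral_deriv_exp_mul_sq_of_primitive hg hy K hT
      rw [id, h]
      ring
  rw [IntegrableAtFilter.eq_zero_of_tendsto ⟨_, Filter.Ici_mem_atTop t, hyL2⟩ ?_ hlim] at hlim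
  · have h := hlim.sqrt
    rw [Real.sqrt_zero] at h
    refine (tendsto_zero_iff_abs_tendsto_zero _).2 (h.congr fun s => ?_)
    rw [Function.comp_apply, ← Real.sqrt_sq_eq_abs, mul_pow, ← Real.exp_nat_mul]
    congr 3
    push_cast
    ring
  · intro s hs
    obtain ⟨c, hc⟩ := Filter.mem_atTop_sets.1 hs
    rw [← top_le_iff, ← Real.volume_Ici (a := c)]
    exact measure_mono hc

theorem sq_apply_le_dotProduct_self {ι : Type*} [Fintype ι] (v : ι → ℝ) (i : ι) :
    v i ^ 2 ≤ v ⬝ᵥ v := by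
  rw [sq]
  exact Finset.single_le_sum (f := fun j => v j * v j) (fun j _ => mul_self_nonneg _)
    (Finset.mem_univ i)

/-- Deterministic version of Remark 2.1: a weighted-`L²` solution of a linear
equation `x' = A x + b` with (a.e.) operator-norm-bounded coefficient `A` and
weighted-`L²` nonhomogeneous term `b` satisfies `e^{Ks} x(s) → 0` as `s → ∞`.
The operator norm bound `‖A(s)‖ ≤ L` is expressed as
`|A(s)v|² ≤ L²|v|²` for all `v`. -/
theorem stmt_2 (n : ℕ) (t K L : ℝ) (ht : 0 ≤ t) (hL : 0 ≤ L)
    (A : ℝ → Matrix (Fin n) (Fin n) ℝ) (b x : ℝ → (Fin n → ℝ))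
    (hA : ∀ i j, Measurable fun s => A s i j)
    (hb : Measurable b)
    (hAbd : ∀ᵐ s ∂(volume.restrict (Set.Ici t)),
      ∀ v : Fin n → ℝ, (A s *ᵥ v) ⬝ᵥ (A s *ᵥ v) ≤ L^2 * (v ⬝ᵥ v))
    (hint : ∀ T, t ≤ T → IntegrableOn (fun s => A s *ᵥ x s + b s) (Set.Icc t T))
    (hx : ∀ s, t ≤ s → x s = x t + ∫ r in t..s, (A r *ᵥ x r + b r))
    (hxL2 : IntegrableOn (fun s => Real.exp (2*K*s) * (x s ⬝ᵥ x s)) (Set.Ici t))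
    (hbL2 : IntegrableOn (fun s => Real.exp (2*K*s) * (b s ⬝ᵥ b s)) (Set.Ici t)) :
    Filter.Tendsto (fun s => Real.exp (K*s) • x s) Filter.atTop (nhds 0) := by
  have hgi : ∀ i T, t ≤ T → IntegrableOn (fun s => (A s *ᵥ x s + b s) i) (Set.Icc t T) :=
    fun i T hT => (hint T hT).eval i
  have hxi : ∀ i s, t ≤ s → x s i = x t i + ∫ r in t..s, (A r *ᵥ x r + b r) i := by
    intro i s hs
    have h := congrFun (hx s hs) i
    rw [h, Pi.add_apply, intervalIntegral.integral_of_le hs, intervalIntegral.integral_of_le hs,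
      eval_integral fun j => (hgi j s hs).mono_set Set.Ioc_subset_Icc_self]
  refine tendsto_pi_nhds.2 fun i => ?_
  refine tendsto_exp_mul_zero_of_primitive (hgi i) (hxi i) K ?_ ?_
  · refine hxL2.mono' ?_ (Filter.Eventually.of_forall fun s => ?_)
    · exact (by fun_prop : Continuous fun s => Real.exp (2 * K * s)).aestronglyMeasurable.mul
        ((aestronglyMeasurable_of_primitive (hgi i) (hxi i)).pow 2)
    · rw [Real.norm_of_nonneg (by positivity)]
      gcongr
      exact sq_apply_le_dotProduct_self _ i
  · refine ((hxL2.const_mul (2 * L ^ 2)).add (hbL2.const_mul 2)).mono' ?_ ?_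
    · exact (by fun_prop : Continuous fun s => Real.exp (2 * K * s)).aestronglyMeasurable.mul
        ((aestronglyMeasurable_restrict_Ici_of_Icc fun T hT =>
          (hgi i T hT).aestronglyMeasurable).pow 2)
    · filter_upwards [hAbd] with s hs
      rw [Real.norm_of_nonneg (by positivity)]
      have hA' := (sq_apply_le_dotProduct_self (A s *ᵥ x s) i).trans (hs (x s))
      have hb' := sq_apply_le_dotProduct_self (b s) i
      calc Real.exp (2 * K * s) * (A s *ᵥ x s + b s) i ^ 2
          ≤ Real.exp (2 * K * s) * (2 * (L ^ 2 * (x s ⬝ᵥ x s)) + 2 * (b s ⬝ᵥ b s)) := by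
            gcongr
            rw [Pi.add_apply]
            nlinarith [sq_nonneg ((A s *ᵥ x s) i - b s i)]
        _ = _ := by
            simp only [Pi.add_apply]
            ring
end

section
/- Under the same hypotheses as the finite-interval backward estimate, but with y defined on [t,∞), satisfying the same linear backward equation for almost every s ≥ t, and additionally assuming 2κ − 2K − 3ε > 0, lim_{T→∞} e^{KT} y(T) = 0, and that ∫_t^∞ e^{2Ks}( ‖C(s)‖² |z(s)|² + ‖M(s,·)‖_ρ² ‖k(s,·)‖_ρ² + |f(s)|² ) ds < ∞, one has y ∈ L^{2,K}(t,∞;ℝ^n) and e^{2Kt}|y(t)|² + (2κ − 2K − 3ε) ∫_t^∞ e^{2Ks}|y(s)|² ds ≤ (1/ε) ∫_t^∞ e^{2Ks} ( ‖C(s)‖² |z(s)|² + ‖M(s,·)‖_ρ² ‖k(s,·)‖_ρ² + |f(s)|² ) ds. -/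
open MeasureTheory Matrix

/-- Euclidean operator norm of a real matrix. -/
noncomputable def opNorm {p q : ℕ} (C : Matrix (Fin p) (Fin q) ℝ) : ℝ :=
  sSup ((fun v => Real.sqrt ((C *ᵥ v) ⬝ᵥ (C *ᵥ v))) ''
    {v : Fin q → ℝ | Real.sqrt (v ⬝ᵥ v) ≤ 1})

/-- Young's inequality for a number whose square is bounded by a product. -/
lemma two_mul_le_of_sq_le_mul {ε x P Q : ℝ} (hε : 0 < ε) (hP : 0 ≤ P) (hQ : 0 ≤ Q)
    (h : x ^ 2 ≤ P * Q) : 2 * x ≤ ε * Q + (1 / ε) * P := by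
  have hne : ε * (1 / ε) = 1 := by field_simp
  have h0 : 0 ≤ 1 / ε := by positivity
  apply le_of_sq_le_sq _ (by positivity)
  nlinarith [sq_nonneg (ε * Q - (1 / ε) * P),
    show (ε * Q) * ((1 / ε) * P) = P * Q by linear_combination P * Q * hne]

lemma dotProduct_self_nonneg_real {n : ℕ} (v : Fin n → ℝ) : 0 ≤ v ⬝ᵥ v :=
  Finset.sum_nonneg fun i _ => mul_self_nonneg (v i)

/-- The Cauchy–Schwarz inequality for the dot product. -/
lemma dotProduct_sq_le {n : ℕ} (v w : Fin n → ℝ) :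
    (v ⬝ᵥ w) ^ 2 ≤ (v ⬝ᵥ v) * (w ⬝ᵥ w) := by
  simpa [dotProduct, sq] using Finset.sum_mul_sq_le_sq_mul_sq Finset.univ v w

lemma mulVec_dotProduct_self_le_frobenius {p q : ℕ} (C : Matrix (Fin p) (Fin q) ℝ)
    (v : Fin q → ℝ) :
    (C *ᵥ v) ⬝ᵥ (C *ᵥ v) ≤ (∑ i, ∑ j, (C i j) ^ 2) * (v ⬝ᵥ v) := by
  rw [Finset.sum_mul]
  refine Finset.sum_le_sum fun i _ => ?_
  have := dotProduct_sq_le (C i) v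
  simpa [mulVec, dotProduct, sq] using this

lemma opNorm_nonneg {p q : ℕ} (C : Matrix (Fin p) (Fin q) ℝ) : 0 ≤ opNorm C := by
  apply Real.sSup_nonneg
  rintro _ ⟨v, _, rfl⟩
  exact Real.sqrt_nonneg _

lemma sqrt_mulVec_le_opNorm {p q : ℕ} (C : Matrix (Fin p) (Fin q) ℝ) {v : Fin q → ℝ}
    (hv : v ⬝ᵥ v ≤ 1) : Real.sqrt ((C *ᵥ v) ⬝ᵥ (C *ᵥ v)) ≤ opNorm C := by
  refine le_csSup ⟨Real.sqrt (∑ i, ∑ j, (C i j) ^ 2), ?_⟩ ⟨v, Real.sqrt_le_one.2 hv, rfl⟩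
  rintro _ ⟨w, hw, rfl⟩
  refine Real.sqrt_le_sqrt ((mulVec_dotProduct_self_le_frobenius C w).trans ?_)
  exact mul_le_of_le_one_right
    (Finset.sum_nonneg fun i _ => Finset.sum_nonneg fun j _ => sq_nonneg _)
    (Real.sqrt_le_one.1 hw)

lemma mulVec_dotProduct_self_le {p q : ℕ} (C : Matrix (Fin p) (Fin q) ℝ) (v : Fin q → ℝ) :
    (C *ᵥ v) ⬝ᵥ (C *ᵥ v) ≤ (opNorm C) ^ 2 * (v ⬝ᵥ v) := by
  rcases (dotProduct_self_nonneg_real v).eq_or_lt with h0 | hpos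
  · have hv : v = 0 := dotProduct_self_eq_zero.1 h0.symm
    simp [hv]
  · set r := Real.sqrt (v ⬝ᵥ v) with hr
    have hrpos : 0 < r := Real.sqrt_pos.2 hpos
    have hr2 : r ^ 2 = v ⬝ᵥ v := Real.sq_sqrt hpos.le
    have hunit : (r⁻¹ • v) ⬝ᵥ (r⁻¹ • v) ≤ 1 := by
      rw [smul_dotProduct, dotProduct_smul, ← hr2]
      simp only [smul_eq_mul]
      field_simp
      exact le_rfl
    have h := sqrt_mulVec_le_opNorm C hunit
    have h2 := (Real.sqrt_le_left (opNorm_nonneg C)).1 h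
    rw [mulVec_smul, smul_dotProduct, dotProduct_smul] at h2
    simp only [smul_eq_mul] at h2
    rw [← hr2]
    calc (C *ᵥ v) ⬝ᵥ (C *ᵥ v) = (r⁻¹ * (r⁻¹ * ((C *ᵥ v) ⬝ᵥ (C *ᵥ v)))) * r ^ 2 := by
          field_simp
      _ ≤ _ := mul_le_mul_of_nonneg_right h2 (sq_nonneg r)

/-- An integral Cauchy–Schwarz inequality: a pointwise bound `g² ≤ a b` integrates. -/
lemma sq_integral_le_of_sq_le_mul {E : Type*} [MeasurableSpace E] {μ : Measure E}
    {g a b : E → ℝ} (ha : Integrable a μ) (hb : Integrable b μ)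
    (ha0 : ∀ e, 0 ≤ a e) (hb0 : ∀ e, 0 ≤ b e) (h : ∀ e, (g e) ^ 2 ≤ a e * b e) :
    (∫ e, g e ∂μ) ^ 2 ≤ (∫ e, a e ∂μ) * ∫ e, b e ∂μ := by
  by_cases hg : Integrable g μ
  · have hquad : ∀ x : ℝ, 0 ≤ (∫ e, a e ∂μ) * (x * x) + (2 * ∫ e, g e ∂μ) * x
        + ∫ e, b e ∂μ := by
      intro x
      have hI : 0 ≤ ∫ e, (a e * (x * x) + g e * (2 * x) + b e) ∂μ := by
        refine integral_nonneg fun e => ?_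
        rcases (ha0 e).eq_or_lt with h0 | hpos
        · have hg0 : g e = 0 := by
            have := h e
            rw [← h0, zero_mul] at this
            exact pow_eq_zero_iff two_ne_zero |>.1 (le_antisymm this (sq_nonneg _))
          simpa [← h0, hg0] using hb0 e
        · refine nonneg_of_mul_nonneg_right (a := a e) ?_ hpos
          nlinarith [sq_nonneg (a e * x + g e), h e]
      have hag : Integrable (fun e => a e * (x * x) + g e * (2 * x)) μ :=
        (ha.mul_const _).add (hg.mul_const _)
      rw [integral_add hag hb, integral_add (ha.mul_const _) (hg.mul_const _),
        integral_mul_const, integral_mul_const] at hI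
      linarith
    have := discrim_le_zero hquad
    unfold discrim at this
    nlinarith
  · rw [integral_undef hg]
    simpa using mul_nonneg (integral_nonneg ha0) (integral_nonneg hb0)

lemma dotProduct_integral {E : Type*} [MeasurableSpace E] {μ : Measure E} {n : ℕ}
    {F : E → Fin n → ℝ} (hF : Integrable F μ) (v : Fin n → ℝ) :
    v ⬝ᵥ ∫ e, F e ∂μ = ∫ e, v ⬝ᵥ F e ∂μ := by
  simp only [dotProduct]
  rw [integral_finsetSum _ fun i _ => (hF.eval i).const_mul (v i)]
  refine Finset.sum_congr rfl fun i _ => ?_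
  rw [integral_const_mul, eval_integral fun i => hF.eval i]

lemma sq_dotProduct_integral_mulVec_le {E : Type*} [MeasurableSpace E] {μ : Measure E} {n : ℕ}
    {M : E → Matrix (Fin n) (Fin n) ℝ} {k : E → Fin n → ℝ} (v : Fin n → ℝ)
    (hM : Integrable (fun e => ∑ i, ∑ i', (M e i i') ^ 2) μ)
    (hk : Integrable (fun e => k e ⬝ᵥ k e) μ) :
    (v ⬝ᵥ ∫ e, (M e)ᵀ *ᵥ k e ∂μ) ^ 2
      ≤ ((∫ e, ∑ i, ∑ i', (M e i i') ^ 2 ∂μ) * (v ⬝ᵥ v)) * ∫ e, k e ⬝ᵥ k e ∂μ := by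
  have hM0 : ∀ e, 0 ≤ ∑ i, ∑ i', (M e i i') ^ 2 := fun e =>
    Finset.sum_nonneg fun i _ => Finset.sum_nonneg fun j _ => sq_nonneg _
  by_cases hF : Integrable (fun e => (M e)ᵀ *ᵥ k e) μ
  · rw [dotProduct_integral hF, ← integral_mul_const]
    refine sq_integral_le_of_sq_le_mul (hM.mul_const _) hk
      (fun e => mul_nonneg (hM0 e) (dotProduct_self_nonneg_real v))
      (fun e => dotProduct_self_nonneg_real _) fun e => ?_
    rw [mulVec_transpose, dotProduct_comm, ← dotProduct_mulVec, dotProduct_comm]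
    exact (dotProduct_sq_le _ _).trans (mul_le_mul_of_nonneg_right
      (mulVec_dotProduct_self_le_frobenius _ _) (dotProduct_self_nonneg_real _))
  · rw [integral_undef hF]
    simpa using mul_nonneg (mul_nonneg (integral_nonneg hM0) (dotProduct_self_nonneg_real v))
      (integral_nonneg fun e => dotProduct_self_nonneg_real (k e))

lemma sq_dotProduct_sum_integral_mulVec_le {E : Type*} [MeasurableSpace E] {l n : ℕ}
    {ρ : Fin l → Measure E} {M : Fin l → E → Matrix (Fin n) (Fin n) ℝ}
    {k : Fin l → E → Fin n → ℝ} (v : Fin n → ℝ)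
    (hM : ∀ j, Integrable (fun e => ∑ i, ∑ i', (M j e i i') ^ 2) (ρ j))
    (hk : ∀ j, Integrable (fun e => k j e ⬝ᵥ k j e) (ρ j)) :
    (v ⬝ᵥ ∑ j, ∫ e, (M j e)ᵀ *ᵥ k j e ∂(ρ j)) ^ 2
      ≤ ((∑ j, ∫ e, ∑ i, ∑ i', (M j e i i') ^ 2 ∂(ρ j))
          * (∑ j, ∫ e, k j e ⬝ᵥ k j e ∂(ρ j))) * (v ⬝ᵥ v) := by
  rw [dotProduct_sum, mul_right_comm, Finset.sum_mul]
  refine Finset.sum_sq_le_sum_mul_sum_of_sq_le_mul _ (fun j _ => ?_) (fun j _ => ?_)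
    fun j _ => sq_dotProduct_integral_mulVec_le v (hM j) (hk j)
  · exact mul_nonneg (integral_nonneg fun e => Finset.sum_nonneg fun i _ =>
      Finset.sum_nonneg fun j _ => sq_nonneg _) (dotProduct_self_nonneg_real v)
  · exact integral_nonneg fun e => dotProduct_self_nonneg_real _

/-- The pointwise dissipation estimate for the backward drift. -/
lemma dissipation_le_two_mul_dotProduct_drift {E : Type*} [MeasurableSpace E] {n p l : ℕ}
    {K ε κ : ℝ} (hε : 0 < ε) {ρ : Fin l → Measure E} {A : Matrix (Fin n) (Fin n) ℝ}
    {C : Matrix (Fin p) (Fin n) ℝ} {z : Fin p → ℝ} {f v : Fin n → ℝ}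
    {M : Fin l → E → Matrix (Fin n) (Fin n) ℝ} {k : Fin l → E → Fin n → ℝ}
    (hdiss : ((A + Aᵀ) *ᵥ v) ⬝ᵥ v ≤ -2 * κ * (v ⬝ᵥ v))
    (hM : ∀ j, Integrable (fun e => ∑ i, ∑ i', (M j e i i') ^ 2) (ρ j))
    (hk : ∀ j, Integrable (fun e => k j e ⬝ᵥ k j e) (ρ j)) :
    (2 * κ - 2 * K - 3 * ε) * (v ⬝ᵥ v) - (1 / ε) * ((opNorm C) ^ 2 * (z ⬝ᵥ z)
          + (∑ j, ∫ e, ∑ i, ∑ i', (M j e i i') ^ 2 ∂(ρ j))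
            * (∑ j, ∫ e, k j e ⬝ᵥ k j e ∂(ρ j)) + f ⬝ᵥ f)
      ≤ 2 * K * (v ⬝ᵥ v) + 2 * (v ⬝ᵥ
        (-((((2*K) • (1 : Matrix (Fin n) (Fin n) ℝ) + A)ᵀ) *ᵥ v)
          - Cᵀ *ᵥ z - (∑ j, ∫ e, (M j e)ᵀ *ᵥ k j e ∂(ρ j)) - f)) := by
  have hv := dotProduct_self_nonneg_real v
  have hCz : (v ⬝ᵥ Cᵀ *ᵥ z) ^ 2 ≤ ((opNorm C) ^ 2 * (z ⬝ᵥ z)) * (v ⬝ᵥ v) := by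
    rw [mulVec_transpose, dotProduct_comm, ← dotProduct_mulVec]
    refine (dotProduct_sq_le _ _).trans ?_
    rw [mul_right_comm, mul_comm]
    exact mul_le_mul_of_nonneg_right (mulVec_dotProduct_self_le C v)
      (dotProduct_self_nonneg_real z)
  have hC' := two_mul_le_of_sq_le_mul hε
    (mul_nonneg (sq_nonneg _) (dotProduct_self_nonneg_real z)) hv hCz
  have hM' := two_mul_le_of_sq_le_mul hε (mul_nonneg
      (Finset.sum_nonneg fun j _ => integral_nonneg fun e => Finset.sum_nonneg fun i _ =>
        Finset.sum_nonneg fun i' _ => sq_nonneg _)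
      (Finset.sum_nonneg fun j _ => integral_nonneg fun e => dotProduct_self_nonneg_real _)) hv
    (sq_dotProduct_sum_integral_mulVec_le v hM hk)
  have hf' := two_mul_le_of_sq_le_mul hε (dotProduct_self_nonneg_real f) hv
    ((dotProduct_sq_le v f).trans_eq (mul_comm _ _))
  have hA : v ⬝ᵥ (((2*K) • (1 : Matrix (Fin n) (Fin n) ℝ) + A)ᵀ *ᵥ v)
      = 2 * K * (v ⬝ᵥ v) + v ⬝ᵥ (A *ᵥ v) := by
    rw [mulVec_transpose, dotProduct_comm, ← dotProduct_mulVec, add_mulVec, smul_mulVec,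
      one_mulVec, dotProduct_add, dotProduct_smul, smul_eq_mul]
  have hA2 : ((A + Aᵀ) *ᵥ v) ⬝ᵥ v = 2 * (v ⬝ᵥ (A *ᵥ v)) := by
    rw [add_mulVec, add_dotProduct, mulVec_transpose, ← dotProduct_mulVec,
      dotProduct_comm (A *ᵥ v)]
    ring
  rw [hA2] at hdiss
  simp only [dotProduct_sub, dotProduct_neg, hA]
  linarith

lemma continuousOn_of_eq_add_integral {n : ℕ} {t T : ℝ} {y G : ℝ → Fin n → ℝ}
    (hG : IntegrableOn G (Set.Icc t T)) (htT : t ≤ T)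
    (hy : ∀ s, t ≤ s → y s = y t + ∫ r in t..s, G r) : ContinuousOn y (Set.Icc t T) := by
  have hc := intervalIntegral.continuousOn_primitive_interval
    (μ := volume) (f := G) (a := t) (b := T) (by rwa [Set.uIcc_of_le htT])
  rw [Set.uIcc_of_le htT] at hc
  exact (continuousOn_const.add hc).congr fun s hs => hy s hs.1

/-- Energy inequality on a compact interval, for an absolutely continuous path whose weighted
energy has derivative bounded below by `h`. -/
lemma integral_le_weighted_energy_sub {n : ℕ} {t T K : ℝ} {y G : ℝ → Fin n → ℝ} {h : ℝ → ℝ}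
    (htT : t ≤ T) (hG : IntegrableOn G (Set.Icc t T))
    (hy : ∀ s, t ≤ s → y s = y t + ∫ r in t..s, G r)
    (hh : IntervalIntegrable h volume t T)
    (hle : ∀ᵐ s, s ∈ Set.Icc t T →
      h s ≤ Real.exp (2*K*s) * (2 * K * (y s ⬝ᵥ y s) + 2 * (y s ⬝ᵥ G s))) :
    ∫ s in t..T, h s
      ≤ Real.exp (2*K*T) * (y T ⬝ᵥ y T) - Real.exp (2*K*t) * (y t ⬝ᵥ y t) := by
  have hGi : ∀ i, IntervalIntegrable (fun s => G s i) volume t T := fun i =>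
    (intervalIntegrable_iff_integrableOn_Icc_of_le htT).2 (hG.eval i)
  let Y : ℝ → Fin n → ℝ := fun s i => y t i + ∫ r in t..s, G r i
  have hYy : ∀ s ∈ Set.Icc t T, Y s = y s := by
    intro s hs
    funext i
    have hGs : Integrable G (volume.restrict (Set.Ioc t s)) :=
      hG.mono_set (Set.Ioc_subset_Icc_self.trans (Set.Icc_subset_Icc_right hs.2))
    rw [hy s hs.1, Pi.add_apply, intervalIntegral.integral_of_le hs.1,
      eval_integral fun i => hGs.eval i, ← intervalIntegral.integral_of_le hs.1]
  have hYd : ∀ᵐ s, ∀ i, s ∈ Set.uIcc t T → HasDerivAt (fun s => Y s i) (G s i) s := by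
    refine ae_all_iff.2 fun i => ?_
    filter_upwards [(hGi i).ae_hasDerivAt_integral] with s hs hsm
    exact (hs hsm t Set.left_mem_uIcc).const_add (y t i)
  have hconst : ∀ c : ℝ, AbsolutelyContinuousOnInterval (fun _ => c) t T := fun c =>
    contDiffOn_const.absolutelyContinuousOnInterval
  have hYac : ∀ i, AbsolutelyContinuousOnInterval (fun s => Y s i) t T := fun i =>
    (hconst (y t i)).add
      ((hGi i).absolutelyContinuousOnInterval_intervalIntegral Set.left_mem_uIcc)
  have hE : AbsolutelyContinuousOnInterval (fun s => Real.exp (2*K*s)) t T :=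
    ContDiffOn.absolutelyContinuousOnInterval (ContDiff.contDiffOn (by fun_prop))
  have hsum : ∀ S : Finset (Fin n),
      AbsolutelyContinuousOnInterval (fun s => ∑ i ∈ S, Y s i * Y s i) t T := by
    intro S
    induction S using Finset.induction_on with
    | empty => simpa using hconst 0
    | insert i S hi ih =>
      simp only [Finset.sum_insert hi]
      exact ((hYac i).fun_mul (hYac i)).add ih
  have hφ : AbsolutelyContinuousOnInterval (fun s => Real.exp (2*K*s) * (Y s ⬝ᵥ Y s)) t T :=
    hE.fun_mul (hsum Finset.univ)
  rw [← hYy t (Set.left_mem_Icc.2 htT), ← hYy T (Set.right_mem_Icc.2 htT),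
    ← hφ.integral_deriv_eq_sub]
  refine intervalIntegral.integral_mono_ae_restrict htT hh hφ.intervalIntegrable_deriv ?_
  rw [Filter.EventuallyLE, ae_restrict_iff' measurableSet_Icc]
  filter_upwards [hYd, hle] with s hd hs hsm
  refine (hs hsm).trans_eq ?_
  have hdi := fun i => hd i (by rwa [Set.uIcc_of_le htT])
  have hexp : HasDerivAt (fun s => Real.exp (2*K*s)) (Real.exp (2*K*s) * (2*K)) s := by
    simpa using ((hasDerivAt_id s).const_mul (2*K)).exp
  have hsq : HasDerivAt (fun s => Y s ⬝ᵥ Y s) (2 * (Y s ⬝ᵥ G s)) s := by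
    have h2 : HasDerivAt (fun s => Y s ⬝ᵥ Y s) (∑ i, (G s i * Y s i + Y s i * G s i)) s :=
      HasDerivAt.fun_sum fun i _ => (hdi i).mul (hdi i)
    convert h2 using 1
    rw [dotProduct, Finset.mul_sum]
    exact Finset.sum_congr rfl fun i _ => by ring
  rw [(hexp.fun_mul hsq).deriv, hYy s hsm]
  ring

/-- Deterministic infinite-horizon a priori estimate underlying Lemma 2.5
(equation (2.11)): under the finite-interval backward hypotheses on `[t,∞)`,
together with `2κ - 2K - 3ε > 0`, `e^{KT} y(T) → 0` and finiteness of the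
weighted driving integral, `y` is weighted square-integrable and satisfies
the stated energy inequality. -/
theorem stmt_4 (n p l : ℕ) (t K ε κ : ℝ) (ht : 0 ≤ t) (hε : 0 < ε)
    (hεκ : 0 < 2*κ - 2*K - 3*ε)
    (E : Type) [MeasurableSpace E] (ρ : Fin l → Measure E) (hρ : ∀ j, SigmaFinite (ρ j))
    (A : ℝ → Matrix (Fin n) (Fin n) ℝ) (C : ℝ → Matrix (Fin p) (Fin n) ℝ)
    (z : ℝ → (Fin p → ℝ)) (f : ℝ → (Fin n → ℝ))
    (M : Fin l → ℝ → E → Matrix (Fin n) (Fin n) ℝ)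
    (k : Fin l → ℝ → E → (Fin n → ℝ))
    (y : ℝ → (Fin n → ℝ))
    (hA : ∀ i j, Measurable fun s => A s i j)
    (hC : ∀ i j, Measurable fun s => C s i j)
    (hz : Measurable z) (hf : Measurable f)
    (hM : ∀ j i i', Measurable fun q : ℝ × E => M j q.1 q.2 i i')
    (hk : ∀ j, Measurable fun q : ℝ × E => k j q.1 q.2)
    (hdiss : ∀ᵐ s ∂(volume.restrict (Set.Ici t)),
      ∀ v : Fin n → ℝ, ((A s + (A s)ᵀ) *ᵥ v) ⬝ᵥ v ≤ -2 * κ * (v ⬝ᵥ v))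
    (hMfin : ∀ j, ∀ᵐ s ∂(volume.restrict (Set.Ici t)),
      Integrable (fun e => ∑ i, ∑ i', (M j s e i i')^2) (ρ j))
    (hkfin : ∀ j, ∀ᵐ s ∂(volume.restrict (Set.Ici t)),
      Integrable (fun e => (k j s e) ⬝ᵥ (k j s e)) (ρ j))
    (hint : ∀ T, t ≤ T → IntegrableOn (fun s =>
      -((((2*K) • (1 : Matrix (Fin n) (Fin n) ℝ) + A s)ᵀ) *ᵥ y s)
        - (C s)ᵀ *ᵥ z s - (∑ j, ∫ e, (M j s e)ᵀ *ᵥ k j s e ∂(ρ j)) - f s)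
      (Set.Icc t T))
    (hy : ∀ s, t ≤ s → y s = y t + ∫ r in t..s,
      (-((((2*K) • (1 : Matrix (Fin n) (Fin n) ℝ) + A r)ᵀ) *ᵥ y r)
        - (C r)ᵀ *ᵥ z r - (∑ j, ∫ e, (M j r e)ᵀ *ᵥ k j r e ∂(ρ j)) - f r))
    (hylim : Filter.Tendsto (fun T => Real.exp (K*T) • y T) Filter.atTop (nhds 0))
    (hdrive : IntegrableOn (fun s => Real.exp (2*K*s) *
          ((opNorm (C s))^2 * (z s ⬝ᵥ z s)
            + (∑ j, ∫ e, ∑ i, ∑ i', (M j s e i i')^2 ∂(ρ j))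
              * (∑ j, ∫ e, (k j s e) ⬝ᵥ (k j s e) ∂(ρ j))
            + (f s ⬝ᵥ f s))) (Set.Ici t)) :
    IntegrableOn (fun s => Real.exp (2*K*s) * (y s ⬝ᵥ y s)) (Set.Ici t) ∧
    Real.exp (2*K*t) * (y t ⬝ᵥ y t)
      + (2*κ - 2*K - 3*ε) * ∫ s in Set.Ici t, Real.exp (2*K*s) * (y s ⬝ᵥ y s)
    ≤ (1/ε) * ∫ s in Set.Ici t, Real.exp (2*K*s) *
          ((opNorm (C s))^2 * (z s ⬝ᵥ z s)
            + (∑ j, ∫ e, ∑ i, ∑ i', (M j s e i i')^2 ∂(ρ j))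
              * (∑ j, ∫ e, (k j s e) ⬝ᵥ (k j s e) ∂(ρ j))
            + (f s ⬝ᵥ f s)) := by
  set D : ℝ → ℝ := fun s => Real.exp (2*K*s) *
          ((opNorm (C s))^2 * (z s ⬝ᵥ z s)
            + (∑ j, ∫ e, ∑ i, ∑ i', (M j s e i i')^2 ∂(ρ j))
              * (∑ j, ∫ e, (k j s e) ⬝ᵥ (k j s e) ∂(ρ j))
            + (f s ⬝ᵥ f s)) with hD
  set φ : ℝ → ℝ := fun s => Real.exp (2*K*s) * (y s ⬝ᵥ y s) with hφ
  have hφ0 : ∀ s, 0 ≤ φ s := fun s =>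
    mul_nonneg (Real.exp_nonneg _) (dotProduct_self_nonneg_real _)
  have hφi : ∀ T, t ≤ T → IntervalIntegrable φ volume t T := by
    intro T hT
    have hc := continuousOn_of_eq_add_integral (hint T hT) hT hy
    refine ContinuousOn.intervalIntegrable_of_Icc hT (ContinuousOn.mul (by fun_prop) ?_)
    have hci := continuousOn_pi.1 hc
    exact continuousOn_finsetSum _ fun i _ => (hci i).mul (hci i)
  have hDi : ∀ T, t ≤ T → IntervalIntegrable D volume t T := fun T hT =>
    (intervalIntegrable_iff_integrableOn_Icc_of_le hT).2 (hdrive.mono_set Set.Icc_subset_Ici_self)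
  have hstep : ∀ T, t ≤ T → φ t + (2*κ - 2*K - 3*ε) * ∫ s in t..T, φ s
      ≤ φ T + (1/ε) * ∫ s in t..T, D s := by
    intro T hT
    have hle := integral_le_weighted_energy_sub (K := K)
      (h := fun s => (2*κ - 2*K - 3*ε) * φ s - (1/ε) * D s) hT (hint T hT) hy
      (((hφi T hT).const_mul _).sub ((hDi T hT).const_mul _)) (by
        have hM' := (ae_restrict_iff' measurableSet_Ici).1 (ae_all_iff.2 hMfin)
        have hk' := (ae_restrict_iff' measurableSet_Ici).1 (ae_all_iff.2 hkfin)
        filter_upwards [(ae_restrict_iff' measurableSet_Ici).1 hdiss, hM', hk']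
          with s hs1 hs2 hs3 hs
        refine le_trans (le_of_eq ?_) (mul_le_mul_of_nonneg_left
          (dissipation_le_two_mul_dotProduct_drift (C := C s) (z := z s) (f := f s) (K := K) hε
            (hs1 hs.1 (y s)) (hs2 hs.1) (hs3 hs.1)) (Real.exp_nonneg (2*K*s)))
        simp only [hφ, hD]
        ring)
    rw [intervalIntegral.integral_sub ((hφi T hT).const_mul _) ((hDi T hT).const_mul _),
      intervalIntegral.integral_const_mul, intervalIntegral.integral_const_mul] at hle
    linarith
  have hφlim : Filter.Tendsto φ Filter.atTop (nhds 0) := by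
    have hci := tendsto_pi_nhds.1 hylim
    have hsum : Filter.Tendsto
        (fun T => ∑ i, (Real.exp (K*T) • y T) i * (Real.exp (K*T) • y T) i)
        Filter.atTop (nhds (∑ i : Fin n, (0 : Fin n → ℝ) i * (0 : Fin n → ℝ) i)) :=
      tendsto_finsetSum _ fun i _ => (hci i).mul (hci i)
    simp only [Pi.zero_apply, mul_zero, Finset.sum_const_zero] at hsum
    refine hsum.congr fun T => ?_
    simp only [hφ, dotProduct, Finset.mul_sum, Pi.smul_apply, smul_eq_mul]
    refine Finset.sum_congr rfl fun i _ => ?_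
    rw [show 2*K*T = K*T + K*T by ring, Real.exp_add]
    ring
  have hDlim := intervalIntegral_tendsto_integral_Ioi t
    (hdrive.mono_set Set.Ioi_subset_Ici_self) Filter.tendsto_id
  have hrhs : Filter.Tendsto (fun T => φ T + (1/ε) * ∫ s in t..T, D s) Filter.atTop
      (nhds (0 + (1/ε) * ∫ s in Set.Ioi t, D s)) := hφlim.add (hDlim.const_mul _)
  have hφint : IntegrableOn φ (Set.Ioi t) := by
    refine integrableOn_Ioi_of_intervalIntegral_norm_bounded
      ((0 + (1/ε) * (∫ s in Set.Ioi t, D s) + 1) / (2*κ - 2*K - 3*ε)) t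
      (b := fun T => max t T) (l := Filter.atTop) (fun T => ?_)
      (Filter.tendsto_atTop_mono (le_max_right t) Filter.tendsto_id) ?_
    · exact (intervalIntegrable_iff_integrableOn_Ioc_of_le (le_max_left _ _)).1
        (hφi _ (le_max_left _ _))
    · filter_upwards [hrhs.eventually_lt_const (lt_add_one _), Filter.eventually_ge_atTop t]
        with T hT htT
      rw [max_eq_right htT, le_div_iff₀ hεκ]
      simp only [Real.norm_of_nonneg (hφ0 _)]
      have := hstep T htT
      linarith [hφ0 t]
  refine ⟨(integrableOn_Ici_iff_integrableOn_Ioi (by simp)).2 hφint, ?_⟩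
  rw [integral_Ici_eq_integral_Ioi, integral_Ici_eq_integral_Ioi]
  have hlhs := ((intervalIntegral_tendsto_integral_Ioi t hφint Filter.tendsto_id).const_mul
    (2*κ - 2*K - 3*ε)).const_add (φ t)
  have := le_of_tendsto_of_tendsto hlhs hrhs
    (Filter.eventually_atTop.2 ⟨t, fun T hT => hstep T hT⟩)
  rwa [zero_add] at this
end

section
/- Let n ∈ ℕ, t ≥ 0, K ∈ ℝ, and let A : [t,∞) → ℝ^{n×n} be measurable with uniformly bounded operator norm. Let β, f : [t,∞) → ℝ^n be measurable, and let x, y : [t,∞) → ℝ^n be locally absolutely continuous with x'(s) = A(s)x(s) + β(s) and y'(s) = −((2K)I + A(s))ᵀ y(s) − f(s) for almost every s ≥ t. Assume x, y, β, f ∈ L^{2,K}(t,∞;ℝ^n) and lim_{T→∞} e^{2KT} ⟨x(T), y(T)⟩ = 0. Then ∫_t^∞ e^{2Ks} ⟨x(s), f(s)⟩ ds = e^{2Kt} ⟨x(t), y(t)⟩ + ∫_t^∞ e^{2Ks} ⟨β(s), y(s)⟩ ds, both integrals being absolutely convergent. -/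
open MeasureTheory Matrix

theorem AbsolutelyContinuousOnInterval.finset_sum {ι : Type*} (s : Finset ι) {F : ι → ℝ → ℝ}
    {a b : ℝ} (hF : ∀ i ∈ s, AbsolutelyContinuousOnInterval (F i) a b) :
    AbsolutelyContinuousOnInterval (fun r => ∑ i ∈ s, F i r) a b := by
  classical
  induction s using Finset.induction_on with
  | empty =>
    simpa using (contDiff_const (c := (0 : ℝ))).contDiffOn.absolutelyContinuousOnInterval
  | insert i s hi ih =>
    simp only [Finset.sum_insert hi]
    exact (hF i (by simp)).add (ih fun j hj => hF j (by simp [hj]))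

/-- A vector-valued primitive, evaluated at a coordinate. -/
theorem primitive_apply {ι : Type*} [Fintype ι] {t s : ℝ} {x g : ℝ → ι → ℝ} (hs : t ≤ s)
    (hg : IntegrableOn g (Set.Icc t s)) (hx : x s = x t + ∫ r in t..s, g r) (i : ι) :
    x s i = x t i + ∫ r in t..s, g r i := by
  rw [hx, Pi.add_apply, intervalIntegral.integral_of_le hs, intervalIntegral.integral_of_le hs,
    eval_integral fun j => (hg.mono_set Set.Ioc_subset_Icc_self).eval j]

/-- Integration by parts for the exponentially weighted dot product of two primitives. -/
theorem integral_exp_mul_dotProduct_eq_sub {ι : Type*} [Fintype ι] {t T c : ℝ}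
    {x y g h : ℝ → ι → ℝ} (hT : t ≤ T)
    (hg : ∀ s, t ≤ s → IntegrableOn g (Set.Icc t s))
    (hx : ∀ s, t ≤ s → x s = x t + ∫ r in t..s, g r)
    (hh : ∀ s, t ≤ s → IntegrableOn h (Set.Icc t s))
    (hy : ∀ s, t ≤ s → y s = y t + ∫ r in t..s, h r) :
    ∫ s in t..T, Real.exp (c * s) * (c * (x s ⬝ᵥ y s) + (g s ⬝ᵥ y s + x s ⬝ᵥ h s)) =
      Real.exp (c * T) * (x T ⬝ᵥ y T) - Real.exp (c * t) * (x t ⬝ᵥ y t) := by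
  have interval {g : ℝ → ι → ℝ}
      (hg : ∀ s, t ≤ s → IntegrableOn g (Set.Icc t s) volume) (i : ι) :
      IntervalIntegrable (fun r => g r i) volume t T :=
    (intervalIntegrable_iff_integrableOn_Ioc_of_le hT).2
      (((hg T hT).mono_set Set.Ioc_subset_Icc_self).eval i)
  have ac {g : ℝ → ι → ℝ}
      (hg : ∀ s, t ≤ s → IntegrableOn g (Set.Icc t s) volume) (a : ℝ) (i : ι) :
      AbsolutelyContinuousOnInterval (fun s => a + ∫ r in t..s, g r i) t T :=
    (contDiff_const (c := a)).contDiffOn.absolutelyContinuousOnInterval.add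
      ((interval hg i).absolutelyContinuousOnInterval_intervalIntegral (by simp))
  set X : ℝ → ι → ℝ := fun s i => x t i + ∫ r in t..s, g r i
  set Y : ℝ → ι → ℝ := fun s i => y t i + ∫ r in t..s, h r i
  have hxX : ∀ s, t ≤ s → x s = X s := fun s hs =>
    funext fun i => primitive_apply hs (hg s hs) (hx s hs) i
  have hyY : ∀ s, t ≤ s → y s = Y s := fun s hs =>
    funext fun i => primitive_apply hs (hh s hs) (hy s hs) i
  have hac : AbsolutelyContinuousOnInterval
      (fun s => Real.exp (c * s) * (X s ⬝ᵥ Y s)) t T := by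
    have hexp : ContDiff ℝ 1 fun s : ℝ => Real.exp (c * s) := by fun_prop
    exact hexp.contDiffOn.absolutelyContinuousOnInterval.fun_mul
      (.finset_sum _ fun i _ => (ac hg (x t i) i).fun_mul (ac hh (y t i) i))
  rw [hxX T hT, hyY T hT, hxX t le_rfl, hyY t le_rfl, ← hac.integral_deriv_eq_sub]
  apply intervalIntegral.integral_congr_ae
  filter_upwards [ae_all_iff.2 fun i => (interval hg i).ae_hasDerivAt_integral,
    ae_all_iff.2 fun i => (interval hh i).ae_hasDerivAt_integral] with s hgs hhs hs
  have hs' := Set.uIoc_subset_uIcc hs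
  have hts : t ≤ s := by rw [Set.uIoc_of_le hT] at hs; exact hs.1.le
  have hXd (i : ι) : HasDerivAt (fun r => X r i) (g s i) s :=
    (hgs i hs' t (by simp)).const_add (x t i)
  have hYd (i : ι) : HasDerivAt (fun r => Y r i) (h s i) s :=
    (hhs i hs' t (by simp)).const_add (y t i)
  have hd : HasDerivAt (fun r => X r ⬝ᵥ Y r) (g s ⬝ᵥ Y s + X s ⬝ᵥ h s) s := by
    simp only [dotProduct, ← Finset.sum_add_distrib]
    exact HasDerivAt.fun_sum fun i _ => (hXd i).mul (hYd i)
  have he : HasDerivAt (fun r : ℝ => Real.exp (c * r)) (Real.exp (c * s) * c) s := by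
    simpa using ((hasDerivAt_id s).const_mul c).exp
  rw [(he.fun_mul hd).deriv, hxX s hts, hyY s hts]
  ring

theorem continuousOn_Ici_of_primitive {E : Type*} [NormedAddCommGroup E] [NormedSpace ℝ E]
    {t : ℝ} {x g : ℝ → E} (hg : ∀ s, t ≤ s → IntegrableOn g (Set.Icc t s))
    (hx : ∀ s, t ≤ s → x s = x t + ∫ r in t..s, g r) : ContinuousOn x (Set.Ici t) := by
  intro s hs
  have hs1 : t ≤ s + 1 := by linarith [Set.mem_Ici.1 hs]
  have hcont : ContinuousOn x (Set.Icc t (s + 1)) := by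
    refine (continuousOn_const (c := x t)).add
      (intervalIntegral.continuousOn_primitive_interval (μ := volume)
        (a := t) (b := s + 1) (f := g) ?_)
      |>.congr ?_ |>.mono (Set.uIcc_of_le hs1).ge
    · rw [Set.uIcc_of_le hs1]; exact hg _ hs1
    · intro r hr
      rw [Set.uIcc_of_le hs1] at hr
      exact hx r hr.1
  refine (hcont s ⟨hs, by linarith⟩).mono_of_mem_nhdsWithin ?_
  rw [← Set.Ici_inter_Iic]
  exact inter_mem_nhdsWithin _ (Iic_mem_nhds (by linarith))

/-- The weighted dot product of two weighted square-integrable functions is integrable. -/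
theorem integrable_mul_dotProduct_of_sq {α ι : Type*} [Fintype ι] [MeasurableSpace α]
    {μ : Measure α} {w : α → ℝ} {u v : α → ι → ℝ} (hw : ∀ a, 0 ≤ w a)
    (hwm : AEStronglyMeasurable w μ) (hum : AEStronglyMeasurable u μ)
    (hvm : AEStronglyMeasurable v μ) (hu : Integrable (fun a => w a * (u a ⬝ᵥ u a)) μ)
    (hv : Integrable (fun a => w a * (v a ⬝ᵥ v a)) μ) :
    Integrable (fun a => w a * (u a ⬝ᵥ v a)) μ := by
  have hdot : Continuous fun p : (ι → ℝ) × (ι → ℝ) => p.1 ⬝ᵥ p.2 := by fun_prop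
  refine (hu.add hv).mono' (hwm.mul (hdot.comp_aestronglyMeasurable (hum.prodMk hvm))) ?_
  refine Filter.Eventually.of_forall fun a => ?_
  rw [norm_mul, Real.norm_of_nonneg (hw a), Pi.add_apply, ← mul_add]
  refine mul_le_mul_of_nonneg_left ?_ (hw a)
  simp only [dotProduct, ← Finset.sum_add_distrib]
  refine (norm_sum_le _ _).trans (Finset.sum_le_sum fun i _ => ?_)
  rw [Real.norm_eq_abs, abs_le]
  constructor <;> nlinarith [sq_nonneg (u a i + v a i), sq_nonneg (u a i - v a i),
    sq_nonneg (u a i), sq_nonneg (v a i)]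

/-- Deterministic infinite-horizon duality (integration-by-parts) identity
between the forward linear equation `x' = A x + β` and its adjoint backward
equation `y' = -((2K)I + A)ᵀ y - f` (used in the proof of Lemma 3.2):
`∫_t^∞ e^{2Ks}⟨x,f⟩ ds = e^{2Kt}⟨x(t),y(t)⟩ + ∫_t^∞ e^{2Ks}⟨β,y⟩ ds`,
both integrals being absolutely convergent. -/
theorem stmt_6 (n : ℕ) (t K : ℝ) (ht : 0 ≤ t)
    (A : ℝ → Matrix (Fin n) (Fin n) ℝ)
    (β f x y : ℝ → (Fin n → ℝ))
    (hA : ∀ i j, Measurable fun s => A s i j)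
    (hAbd : ∃ L : ℝ, ∀ᵐ s ∂(volume.restrict (Set.Ici t)),
      ∀ v : Fin n → ℝ, (A s *ᵥ v) ⬝ᵥ (A s *ᵥ v) ≤ L^2 * (v ⬝ᵥ v))
    (hβ : Measurable β) (hf : Measurable f)
    (hxint : ∀ T, t ≤ T → IntegrableOn (fun s => A s *ᵥ x s + β s) (Set.Icc t T))
    (hx : ∀ s, t ≤ s → x s = x t + ∫ r in t..s, (A r *ᵥ x r + β r))
    (hyint : ∀ T, t ≤ T → IntegrableOn (fun s =>
      -((((2*K) • (1 : Matrix (Fin n) (Fin n) ℝ) + A s)ᵀ) *ᵥ y s) - f s) (Set.Icc t T))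
    (hy : ∀ s, t ≤ s → y s = y t + ∫ r in t..s,
      (-((((2*K) • (1 : Matrix (Fin n) (Fin n) ℝ) + A r)ᵀ) *ᵥ y r) - f r))
    (hxL2 : IntegrableOn (fun s => Real.exp (2*K*s) * (x s ⬝ᵥ x s)) (Set.Ici t))
    (hyL2 : IntegrableOn (fun s => Real.exp (2*K*s) * (y s ⬝ᵥ y s)) (Set.Ici t))
    (hβL2 : IntegrableOn (fun s => Real.exp (2*K*s) * (β s ⬝ᵥ β s)) (Set.Ici t))
    (hfL2 : IntegrableOn (fun s => Real.exp (2*K*s) * (f s ⬝ᵥ f s)) (Set.Ici t))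
    (hlim : Filter.Tendsto (fun T => Real.exp (2*K*T) * (x T ⬝ᵥ y T))
      Filter.atTop (nhds 0)) :
    IntegrableOn (fun s => Real.exp (2*K*s) * (x s ⬝ᵥ f s)) (Set.Ici t) ∧
    IntegrableOn (fun s => Real.exp (2*K*s) * (β s ⬝ᵥ y s)) (Set.Ici t) ∧
    ∫ s in Set.Ici t, Real.exp (2*K*s) * (x s ⬝ᵥ f s)
      = Real.exp (2*K*t) * (x t ⬝ᵥ y t)
        + ∫ s in Set.Ici t, Real.exp (2*K*s) * (β s ⬝ᵥ y s) := by
  have hexp : AEStronglyMeasurable (fun s => Real.exp (2 * K * s)) (volume.restrict (Set.Ici t)) :=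
    (by fun_prop : Continuous fun s => Real.exp (2 * K * s)).aestronglyMeasurable
  have hxm := (continuousOn_Ici_of_primitive hxint hx).aestronglyMeasurable (μ := volume)
    measurableSet_Ici
  have hym := (continuousOn_Ici_of_primitive hyint hy).aestronglyMeasurable (μ := volume)
    measurableSet_Ici
  have hxf : IntegrableOn (fun s => Real.exp (2 * K * s) * (x s ⬝ᵥ f s)) (Set.Ici t) :=
    integrable_mul_dotProduct_of_sq (fun s => (Real.exp_pos _).le) hexp hxm
      hf.aestronglyMeasurable hxL2 hfL2
  have hβy : IntegrableOn (fun s => Real.exp (2 * K * s) * (β s ⬝ᵥ y s)) (Set.Ici t) :=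
    integrable_mul_dotProduct_of_sq (fun s => (Real.exp_pos _).le) hexp
      hβ.aestronglyMeasurable hym hβL2 hyL2
  refine ⟨hxf, hβy, ?_⟩
  have hparts (T : ℝ) (hT : t ≤ T) :
      ∫ s in t..T, (Real.exp (2 * K * s) * (β s ⬝ᵥ y s) - Real.exp (2 * K * s) * (x s ⬝ᵥ f s)) =
        Real.exp (2 * K * T) * (x T ⬝ᵥ y T) - Real.exp (2 * K * t) * (x t ⬝ᵥ y t) := by
    rw [← integral_exp_mul_dotProduct_eq_sub hT hxint hx hyint hy]
    congr 1
    ext s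
    have hadj : x s ⬝ᵥ ((A s)ᵀ *ᵥ y s) = (A s *ᵥ x s) ⬝ᵥ y s := by
      rw [dotProduct_mulVec, vecMul_transpose]
    simp only [transpose_add, transpose_smul, transpose_one, add_mulVec, smul_mulVec, one_mulVec,
      dotProduct_sub, dotProduct_neg, dotProduct_add, dotProduct_smul, add_dotProduct, hadj,
      smul_eq_mul]
    ring
  have hlim_int := intervalIntegral_tendsto_integral_Ioi t
    ((hβy.sub hxf).mono_set Set.Ioi_subset_Ici_self) Filter.tendsto_id
  have hlim_bdry := (hlim.sub_const (Real.exp (2 * K * t) * (x t ⬝ᵥ y t))).congr' <|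
    (Filter.eventually_ge_atTop t).mono fun T hT => (hparts T hT).symm
  have heq := tendsto_nhds_unique hlim_int hlim_bdry
  rw [← integral_Ici_eq_integral_Ioi] at heq
  simp only [Pi.sub_apply] at heq
  rw [integral_sub hβy hxf] at heq
  linarith
end

section
/- Let n, m ∈ ℕ, t ≥ 0, K ∈ ℝ. Let A : [t,∞) → ℝ^{n×n}, B : [t,∞) → ℝ^{n×m}, Q : [t,∞) → Sym_n(ℝ), R : [t,∞) → Sym_m(ℝ) be measurable with uniformly bounded operator norms, with Q(s) ⪰ 0 and R(s) ⪰ δI_m for some δ > 0 and almost every s. Let x, y : [t,∞) → ℝ^n be locally absolutely continuous with x'(s) = A(s)x(s) − B(s)R(s)^{-1}B(s)ᵀ y(s) and y'(s) = −((2K)I + A(s))ᵀ y(s) − Q(s)x(s) for almost every s ≥ t, with x, y ∈ L^{2,K}(t,∞;ℝ^n) and lim_{T→∞} e^{2KT}⟨x(T), y(T)⟩ = 0. Then ∫_t^∞ e^{2Ks} ( ⟨Q(s)x(s), x(s)⟩ + ⟨R(s)^{-1}B(s)ᵀ y(s), B(s)ᵀ y(s)⟩ ) ds = e^{2Kt}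 ⟨x(t), y(t)⟩. -/
open MeasureTheory Matrix

/-- `u` is locally absolutely continuous on `[t, ∞)` with almost everywhere derivative given by the second function. -/
def IsPrimitiveFrom (t : ℝ) (u u' : ℝ → ℝ) : Prop :=
  ∀ s, t ≤ s → IntervalIntegrable u' volume t s ∧ u s = u t + ∫ r in t..s, u' r

namespace IsPrimitiveFrom

variable {t : ℝ} {u v u' v' : ℝ → ℝ}

lemma of_hasDerivAt (hu : ∀ s, HasDerivAt u (u' s) s) (hu' : Continuous u') :
    IsPrimitiveFrom t u u' := fun s _ => by
  have hint := hu'.intervalIntegrable (μ := volume) t s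
  refine ⟨hint, ?_⟩
  rw [intervalIntegral.integral_eq_sub_of_hasDerivAt (fun r _ => hu r) hint]
  ring

lemma of_pi {ι : Type*} [Fintype ι] {f f' : ℝ → ι → ℝ}
    (hint : ∀ T, t ≤ T → IntegrableOn f' (Set.Icc t T))
    (hf : ∀ s, t ≤ s → f s = f t + ∫ r in t..s, f' r) (i : ι) :
    IsPrimitiveFrom t (fun s => f s i) (fun s => f' s i) := fun s hs => by
  have hI : ∀ j, IntegrableOn (fun r => f' r j) (Set.Ioc t s) := fun j =>
    Integrable.eval ((hint s hs).mono_set Set.Ioc_subset_Icc_self) j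
  refine ⟨(intervalIntegrable_iff_integrableOn_Ioc_of_le hs).2 (hI i), ?_⟩
  have h := congrFun (hf s hs) i
  rw [Pi.add_apply, intervalIntegral.integral_of_le hs, eval_integral hI] at h
  simpa only [intervalIntegral.integral_of_le hs] using h

lemma sum {ι : Type*} [Fintype ι] {f f' : ι → ℝ → ℝ}
    (hf : ∀ i, IsPrimitiveFrom t (f i) (f' i)) :
    IsPrimitiveFrom t (fun s => ∑ i, f i s) (fun s => ∑ i, f' i s) := fun s hs => by
  have hint : ∀ i ∈ Finset.univ, IntervalIntegrable (f' i) volume t s :=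
    fun i _ => (hf i s hs).1
  refine ⟨?_, ?_⟩
  · simpa only [Finset.sum_fn] using IntervalIntegrable.sum Finset.univ hint
  · rw [intervalIntegral.integral_finsetSum hint, ← Finset.sum_add_distrib]
    exact Finset.sum_congr rfl fun i _ => (hf i s hs).2

/-- On a compact interval, `u` extends to a function differentiable at almost every point. -/
lemma exists_absolutelyContinuousOnInterval (hu : IsPrimitiveFrom t u u') {s : ℝ} (hs : t ≤ s) :
    ∃ U : ℝ → ℝ, AbsolutelyContinuousOnInterval U t s ∧
      (∀ᵐ r, r ∈ Set.uIcc t s → HasDerivAt U (u' r) r) ∧ Set.EqOn u U (Set.uIcc t s) := by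
  refine ⟨fun r => u t + ∫ q in t..r, u' q, ?_, ?_, fun r hr => ?_⟩
  · exact AbsolutelyContinuousOnInterval.add
      contDiff_const.contDiffOn.absolutelyContinuousOnInterval
      ((hu s hs).1.absolutelyContinuousOnInterval_intervalIntegral Set.left_mem_uIcc)
  · filter_upwards [(hu s hs).1.ae_hasDerivAt_integral] with r hr hrs
    exact (hr hrs t Set.left_mem_uIcc).const_add _
  · rw [Set.uIcc_of_le hs] at hr
    exact (hu r hr.1).2

/-- Product rule for locally absolutely continuous functions. -/
lemma mul (hu : IsPrimitiveFrom t u u') (hv : IsPrimitiveFrom t v v') :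
    IsPrimitiveFrom t (fun s => u s * v s) (fun s => u' s * v s + u s * v' s) := fun s hs => by
  obtain ⟨U, hUac, hUd, hUe⟩ := hu.exists_absolutelyContinuousOnInterval hs
  obtain ⟨V, hVac, hVd, hVe⟩ := hv.exists_absolutelyContinuousOnInterval hs
  refine ⟨((hu s hs).1.mul_continuousOn (hVac.continuousOn.congr hVe)).add
    ((hv s hs).1.continuousOn_mul (hUac.continuousOn.congr hUe)), ?_⟩
  have h := hUac.integral_deriv_mul_eq_sub hVac
  rw [← hUe Set.right_mem_uIcc, ← hVe Set.right_mem_uIcc, ← hUe Set.left_mem_uIcc,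
    ← hVe Set.left_mem_uIcc] at h
  rw [← sub_eq_iff_eq_add', ← h]
  refine intervalIntegral.integral_congr_ae ?_
  filter_upwards [hUd, hVd] with r hur hvr hr
  have hrs := Set.uIoc_subset_uIcc hr
  rw [(hur hrs).deriv, (hvr hrs).deriv, ← hUe hrs, ← hVe hrs]

/-- A locally absolutely continuous function that tends to `0` at infinity and whose derivative
is nonpositive is minus the integral of its derivative. -/
lemma integral_Ici_eq_of_tendsto_zero {g : ℝ → ℝ} (hu : IsPrimitiveFrom t u (fun s => -g s))
    (hg : ∀ᵐ s ∂volume.restrict (Set.Ici t), 0 ≤ g s)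
    (hlim : Filter.Tendsto u Filter.atTop (nhds 0)) :
    ∫ s in Set.Ici t, g s = u t := by
  rw [integral_Ici_eq_integral_Ioi]
  have hint : ∀ s, t ≤ s → ∫ r in t..s, g r = u t - u s := fun s hs => by
    have h := (hu s hs).2
    rw [intervalIntegral.integral_neg] at h
    linarith
  have hlim' : Filter.Tendsto (fun s => ∫ r in t..s, g r) Filter.atTop (nhds (u t)) := by
    have h := hlim.const_sub (u t)
    rw [sub_zero] at h
    refine h.congr' ?_
    filter_upwards [Filter.eventually_ge_atTop t] with s hs using (hint s hs).symm
  have hgi : IntegrableOn g (Set.Ioi t) := by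
    refine integrableOn_Ioi_of_intervalIntegral_norm_tendsto (u t) t (fun s => ?_)
      Filter.tendsto_id (hlim'.congr' ?_)
    · rcases le_total t s with hs | hs
      · simpa using
          ((intervalIntegrable_iff_integrableOn_Ioc_of_le hs).1 (hu s hs).1).neg
      · simp [Set.Ioc_eq_empty_of_le hs]
    · filter_upwards [Filter.eventually_ge_atTop t] with s hs
      rw [id, intervalIntegral.integral_of_le hs, intervalIntegral.integral_of_le hs]
      refine integral_congr_ae ?_
      have hsub : Set.Ioc t s ⊆ Set.Ici t := fun r hr => hr.1.le
      filter_upwards [ae_restrict_of_ae_restrict_of_subset hsub hg] with r hr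
      rw [Real.norm_of_nonneg hr]
  exact tendsto_nhds_unique
    (intervalIntegral_tendsto_integral_Ioi t hgi Filter.tendsto_id) hlim'

end IsPrimitiveFrom

/-- The inverse of a matrix with nonnegative quadratic form has nonnegative quadratic form. -/
lemma Matrix.inv_mulVec_dotProduct_nonneg {k : Type*} [Fintype k] [DecidableEq k]
    {M : Matrix k k ℝ} (hM : ∀ v, 0 ≤ (M *ᵥ v) ⬝ᵥ v) (w : k → ℝ) :
    0 ≤ (M⁻¹ *ᵥ w) ⬝ᵥ w := by
  by_cases h : IsUnit M.det
  · have hw := hM (M⁻¹ *ᵥ w)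
    rwa [mulVec_mulVec, mul_nonsing_inv _ h, one_mulVec, dotProduct_comm] at hw
  · simp [nonsing_inv_apply_not_isUnit _ h]

/-- The pointwise algebra behind the energy identity: along the Hamiltonian system the weighted
pairing dissipates at the rate of the energy density. -/
lemma hamiltonian_pairing_deriv {k l : Type*} [Fintype k] [DecidableEq k] [Fintype l]
    (A Q : Matrix k k ℝ) (B : Matrix k l ℝ) (S : Matrix l l ℝ) (c e : ℝ) (x y : k → ℝ) :
    ∑ i, ((A *ᵥ x - B *ᵥ (S *ᵥ (Bᵀ *ᵥ y))) i * (e * y i)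
      + x i * (c * e * y i + e * (-((c • (1 : Matrix k k ℝ) + A)ᵀ *ᵥ y) - Q *ᵥ x) i))
    = -(e * ((Q *ᵥ x) ⬝ᵥ x + (S *ᵥ (Bᵀ *ᵥ y)) ⬝ᵥ (Bᵀ *ᵥ y))) := by
  have hA : (A *ᵥ x) ⬝ᵥ y = x ⬝ᵥ (Aᵀ *ᵥ y) := by
    rw [dotProduct_mulVec, vecMul_transpose]
  have hB : (S *ᵥ (Bᵀ *ᵥ y)) ⬝ᵥ (Bᵀ *ᵥ y) = (B *ᵥ (S *ᵥ (Bᵀ *ᵥ y))) ⬝ᵥ y := by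
    rw [dotProduct_mulVec, vecMul_transpose]
  have hsum : ∑ i, ((A *ᵥ x - B *ᵥ (S *ᵥ (Bᵀ *ᵥ y))) i * (e * y i)
      + x i * (c * e * y i + e * (-((c • (1 : Matrix k k ℝ) + A)ᵀ *ᵥ y) - Q *ᵥ x) i))
      = e * ((A *ᵥ x) ⬝ᵥ y - (B *ᵥ (S *ᵥ (Bᵀ *ᵥ y))) ⬝ᵥ y - x ⬝ᵥ (Aᵀ *ᵥ y)
        - (Q *ᵥ x) ⬝ᵥ x) := by
    simp only [dotProduct, ← Finset.sum_sub_distrib, Finset.mul_sum]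
    refine Finset.sum_congr rfl fun i _ => ?_
    simp only [transpose_add, transpose_smul, transpose_one, add_mulVec, smul_mulVec,
      one_mulVec, Pi.sub_apply, Pi.neg_apply, Pi.add_apply, Pi.smul_apply, smul_eq_mul]
    ring
  rw [hsum, hA, hB]
  ring

/-- Deterministic version of the energy identity (3.17) used in the proof of
the a priori estimate Lemma 3.5 for the Hamiltonian system: for the coupled
system `x' = A x - B R⁻¹ Bᵀ y`, `y' = -((2K)I + A)ᵀ y - Q x` with `Q ⪰ 0`,
`R ⪰ δI`, weighted square-integrable `x, y` and `e^{2KT}⟨x(T),y(T)⟩ → 0`,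
one has `∫_t^∞ e^{2Ks}(⟨Qx,x⟩ + ⟨R⁻¹Bᵀy, Bᵀy⟩) ds = e^{2Kt}⟨x(t),y(t)⟩`. -/
theorem stmt_8 (n m : ℕ) (t K δ : ℝ) (ht : 0 ≤ t) (hδ : 0 < δ)
    (A : ℝ → Matrix (Fin n) (Fin n) ℝ) (B : ℝ → Matrix (Fin n) (Fin m) ℝ)
    (Q : ℝ → Matrix (Fin n) (Fin n) ℝ) (R : ℝ → Matrix (Fin m) (Fin m) ℝ)
    (hA : ∀ i j, Measurable fun s => A s i j)
    (hB : ∀ i j, Measurable fun s => B s i j)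
    (hQ : ∀ i j, Measurable fun s => Q s i j)
    (hR : ∀ i j, Measurable fun s => R s i j)
    (hQsym : ∀ᵐ s ∂(volume.restrict (Set.Ici t)), (Q s)ᵀ = Q s)
    (hRsym : ∀ᵐ s ∂(volume.restrict (Set.Ici t)), (R s)ᵀ = R s)
    (hbd : ∃ L : ℝ, ∀ᵐ s ∂(volume.restrict (Set.Ici t)),
      (∀ v : Fin n → ℝ, (A s *ᵥ v) ⬝ᵥ (A s *ᵥ v) ≤ L^2 * (v ⬝ᵥ v)) ∧
      (∀ v : Fin m → ℝ, (B s *ᵥ v) ⬝ᵥ (B s *ᵥ v) ≤ L^2 * (v ⬝ᵥ v)) ∧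
      (∀ v : Fin n → ℝ, (Q s *ᵥ v) ⬝ᵥ (Q s *ᵥ v) ≤ L^2 * (v ⬝ᵥ v)) ∧
      (∀ v : Fin m → ℝ, (R s *ᵥ v) ⬝ᵥ (R s *ᵥ v) ≤ L^2 * (v ⬝ᵥ v)))
    (hQpsd : ∀ᵐ s ∂(volume.restrict (Set.Ici t)),
      ∀ v : Fin n → ℝ, 0 ≤ (Q s *ᵥ v) ⬝ᵥ v)
    (hRpd : ∀ᵐ s ∂(volume.restrict (Set.Ici t)),
      ∀ v : Fin m → ℝ, δ * (v ⬝ᵥ v) ≤ (R s *ᵥ v) ⬝ᵥ v)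
    (x y : ℝ → (Fin n → ℝ))
    (hxint : ∀ T, t ≤ T → IntegrableOn (fun s =>
      A s *ᵥ x s - B s *ᵥ ((R s)⁻¹ *ᵥ ((B s)ᵀ *ᵥ y s))) (Set.Icc t T))
    (hx : ∀ s, t ≤ s → x s = x t + ∫ r in t..s,
      (A r *ᵥ x r - B r *ᵥ ((R r)⁻¹ *ᵥ ((B r)ᵀ *ᵥ y r))))
    (hyint : ∀ T, t ≤ T → IntegrableOn (fun s =>
      -((((2*K) • (1 : Matrix (Fin n) (Fin n) ℝ) + A s)ᵀ) *ᵥ y s)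
        - Q s *ᵥ x s) (Set.Icc t T))
    (hy : ∀ s, t ≤ s → y s = y t + ∫ r in t..s,
      (-((((2*K) • (1 : Matrix (Fin n) (Fin n) ℝ) + A r)ᵀ) *ᵥ y r) - Q r *ᵥ x r))
    (hxL2 : IntegrableOn (fun s => Real.exp (2*K*s) * (x s ⬝ᵥ x s)) (Set.Ici t))
    (hyL2 : IntegrableOn (fun s => Real.exp (2*K*s) * (y s ⬝ᵥ y s)) (Set.Ici t))
    (hlim : Filter.Tendsto (fun T => Real.exp (2*K*T) * (x T ⬝ᵥ y T))
      Filter.atTop (nhds 0)) :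
    ∫ s in Set.Ici t, Real.exp (2*K*s) *
        (((Q s *ᵥ x s) ⬝ᵥ x s)
          + (((R s)⁻¹ *ᵥ ((B s)ᵀ *ᵥ y s)) ⬝ᵥ ((B s)ᵀ *ᵥ y s)))
      = Real.exp (2*K*t) * (x t ⬝ᵥ y t) := by
  have hexp : IsPrimitiveFrom t (fun s => Real.exp (2*K*s)) (fun s => 2*K*Real.exp (2*K*s)) := by
    refine IsPrimitiveFrom.of_hasDerivAt (fun s => ?_) (by fun_prop)
    simpa [mul_comm] using ((hasDerivAt_id s).const_mul (2*K)).exp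
  have hprim := IsPrimitiveFrom.sum fun i => (IsPrimitiveFrom.of_pi hxint hx i).mul
    (hexp.mul (IsPrimitiveFrom.of_pi hyint hy i))
  simp only [hamiltonian_pairing_deriv] at hprim
  have hpair : (fun s => ∑ i, x s i * (Real.exp (2*K*s) * y s i))
      = fun s => Real.exp (2*K*s) * (x s ⬝ᵥ y s) := by
    funext s
    rw [dotProduct, Finset.mul_sum]
    exact Finset.sum_congr rfl fun i _ => by ring
  rw [hpair] at hprim
  refine hprim.integral_Ici_eq_of_tendsto_zero ?_ hlim
  filter_upwards [hQpsd, hRpd] with s hQs hRs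
  have hRnonneg : ∀ v : Fin m → ℝ, 0 ≤ (R s *ᵥ v) ⬝ᵥ v := fun v =>
    (mul_nonneg hδ.le (Finset.sum_nonneg fun i _ => mul_self_nonneg (v i))).trans (hRs v)
  exact mul_nonneg (Real.exp_pos _).le
    (add_nonneg (hQs _) (inv_mulVec_dotProduct_nonneg hRnonneg _))
end
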